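/- For every integer n ≥ 1, the corona of the complete graph K_{3n} with the triangle K_3 satisfies γ_MR(K_{3n} ∘ K_3) = −n. -/

import Mathlib

open Finset

namespace MRD

variable {V : Type*}

open scoped Classical

/-- Sum of `f` over the closed neighborhood of `v` in `G`:
`f(N[v]) = \sum_{u \in N[v]} f(u)`. -/
noncomputable def closedNbhdSum [Fintype V] (G : SimpleGraph V) (f : V → ℤ) (v : V) : ℤ :=
  ∑ u ∈ Finset.univ.filter (fun u => G.Adj v u ∨ u = v), f u

/-- `f : V → {-1, 1, 2}` is a Majority Roman Dominating Function (MRDF) on `G`: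
(i) `f(N[v]) ≥ 1` for at least half of the vertices, and (ii) every vertex with value `-1`
is adjacent to a vertex with value `2`. -/
noncomputable def IsMRDF [Fintype V] (G : SimpleGraph V) (f : V → ℤ) : Prop :=
  (∀ v, f v = -1 ∨ f v = 1 ∨ f v = 2) ∧
  Fintype.card V ≤ 2 * (Finset.univ.filter (fun v => 1 ≤ closedNbhdSum G f v)).card ∧
  (∀ u, f u = -1 → ∃ w, G.Adj u w ∧ f w = 2)

/-- The majority Roman domination number `γ_MR(G)`: the minimum weight
`w(f) = ∑_v f(v)` over all MRDFs `f` on `G`. -/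
noncomputable def mrdNum [Fintype V] (G : SimpleGraph V) : ℤ :=
  sInf {w : ℤ | ∃ f : V → ℤ, IsMRDF G f ∧ w = ∑ v, f v}

/-- The join `G ∨ H` of two simple graphs: disjoint union plus all edges between the parts. -/
def join {α β : Type*} (G : SimpleGraph α) (H : SimpleGraph β) : SimpleGraph (α ⊕ β) where
  Adj x y :=
    match x, y with
    | .inl a, .inl b => G.Adj a b
    | .inr a, .inr b => H.Adj a b
    | .inl _, .inr _ => True
    | .inr _, .inl _ => True
  symm := ⟨by rintro (a | a) (b | b) h <;> simp_all [SimpleGraph.adj_comm]⟩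
  loopless := ⟨by rintro (a | a) h <;> simp_all⟩

/-- The corona `G ∘ H` of two simple graphs: one copy of `G` and `|V(G)|` copies of `H`,
where the `v`-th vertex of `G` is joined to every vertex of the `v`-th copy of `H`. -/
def corona {α β : Type*} (G : SimpleGraph α) (H : SimpleGraph β) : SimpleGraph (α ⊕ α × β) where
  Adj x y :=
    match x, y with
    | .inl u, .inl v => G.Adj u v
    | .inr p, .inr q => p.1 = q.1 ∧ H.Adj p.2 q.2
    | .inl u, .inr p => u = p.1
    | .inr p, .inl u => u = p.1
  symm := ⟨by
    rintro (u | ⟨u, x⟩) (v | ⟨v, y⟩) h <;> simp_all [SimpleGraph.adj_comm, eq_comm]⟩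
  loopless := ⟨by rintro (u | ⟨u, x⟩) h <;> simp_all⟩

/-- `S` is a dominating set of `G`. -/
def IsDomSet (G : SimpleGraph V) (S : Finset V) : Prop :=
  ∀ v, v ∉ S → ∃ u ∈ S, G.Adj v u

/-- The domination number `γ(G)`. -/
noncomputable def domNum [Fintype V] (G : SimpleGraph V) : ℕ :=
  sInf {k | ∃ S : Finset V, IsDomSet G S ∧ S.card = k}

/-- A set of vertices is independent if no two of its vertices are adjacent. -/
def IsIndepSet (G : SimpleGraph V) (S : Finset V) : Prop :=
  ∀ a ∈ S, ∀ b ∈ S, ¬ G.Adj a b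

/-- The independence number `β₀(G)`. -/
noncomputable def indepNum [Fintype V] (G : SimpleGraph V) : ℕ :=
  sSup {k | ∃ S : Finset V, IsIndepSet G S ∧ S.card = k}

/-- The cocktail party graph `K_{2n} - M` (complete graph minus a perfect matching),
realized on `Fin n × Fin 2`: `(i,a)` and `(j,b)` are adjacent iff `i ≠ j`. -/
def cocktail (n : ℕ) : SimpleGraph (Fin n × Fin 2) where
  Adj x y := x.1 ≠ y.1
  symm := ⟨fun _ _ h => h.symm⟩
  loopless := ⟨fun _ h => h rfl⟩

end MRD

/-!
Call a vertex of `G` together with its copy of `K_k` a cluster. The closed neighborhood of a copy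
vertex is exactly its cluster, so the `k` copy vertices of a cluster are satisfied together, namely
when the cluster has sum at least `1`. A copy vertex of value `-1` has a neighbor of value `2` in
its cluster, so every cluster has sum at least `2 - k`. Even if all `m` vertices of `G` are
satisfied, the majority condition forces `2k` times the number `t` of positive clusters to be at
least `(k - 1) m`, and the weight is at least `(2 - k) m + (k - 1) t`.

For `k = 2r + 1` this is attained: put `2` on `G`, and `-1` on the copies except for `r` ones in
each cluster that is to be positive, which then has sum `2 + r - (r + 1) = 1`. A vertex of `G` of
degree at least `r` is satisfied even if its own cluster is not positive, because
`2(r + 1) - (2r + 1) = 1`.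
-/

namespace MRD

section ClosedNeighborhood

variable {V : Type*} [Fintype V]

theorem closedNbhdSum_eq_add_sum_ite (G : SimpleGraph V) [DecidableRel G.Adj] (f : V → ℤ)
    (v : V) : closedNbhdSum G f v = f v + ∑ u, if G.Adj v u then f u else 0 := by
  classical
  rw [closedNbhdSum, ← sum_filter, ← sum_insert (by simp)]
  congr 1
  ext u
  simp [or_comm]

theorem closedNbhdSum_top (f : V → ℤ) (v : V) :
    closedNbhdSum (⊤ : SimpleGraph V) f v = ∑ u, f u := by
  simp only [closedNbhdSum, SimpleGraph.top_adj, eq_comm (b := v), ne_or_eq, filter_true]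

theorem closedNbhdSum_const (G : SimpleGraph V) [DecidableRel G.Adj] (c : ℤ) (v : V) :
    closedNbhdSum G (fun _ => c) v = (G.degree v + 1) * c := by
  rw [closedNbhdSum_eq_add_sum_ite, ← sum_filter, ← G.neighborFinset_eq_filter, sum_const,
    G.card_neighborFinset_eq_degree, nsmul_eq_mul]
  ring

theorem le_closedNbhdSum_of_adj {G : SimpleGraph V} {f : V → ℤ} {u v : V} (hf : ∀ w, 0 ≤ f w)
    (huv : G.Adj v u) : f u ≤ closedNbhdSum G f v :=
  single_le_sum (fun w _ => hf w) (by simp [huv])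

theorem IsMRDF.neg_one_le {G : SimpleGraph V} {f : V → ℤ} (hf : IsMRDF G f) (v : V) :
    -1 ≤ f v := by
  rcases hf.1 v with h | h | h <;> omega

end ClosedNeighborhood

variable {α β : Type*} [Fintype β]

section Corona

theorem closedNbhdSum_corona_inl [Fintype α] (G : SimpleGraph α) (H : SimpleGraph β)
    (f : α ⊕ α × β → ℤ) (v : α) : closedNbhdSum (corona G H) f (.inl v) =
      closedNbhdSum G (fun u => f (.inl u)) v + ∑ y, f (.inr (v, y)) := by
  classical
  simp only [closedNbhdSum_eq_add_sum_ite, Fintype.sum_sum_type, Fintype.sum_prod_type, corona,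
    add_assoc]
  rw [Fintype.sum_eq_single (f := fun u => ∑ y, if v = u then f (.inr (u, y)) else 0) v
    fun u hu => by simp [hu.symm]]
  simp only [if_true]

theorem closedNbhdSum_corona_inr [Fintype α] (G : SimpleGraph α) (H : SimpleGraph β)
    (f : α ⊕ α × β → ℤ) (v : α) (x : β) : closedNbhdSum (corona G H) f (.inr (v, x)) =
      f (.inl v) + closedNbhdSum H (fun y => f (.inr (v, y))) x := by
  classical
  simp only [closedNbhdSum_eq_add_sum_ite, Fintype.sum_sum_type, Fintype.sum_prod_type, corona,
    Fintype.sum_ite_eq', add_left_comm]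
  rw [Fintype.sum_eq_single v fun u hu => by simp [hu.symm]]
  simp only [true_and]

/-- The total value of the cluster of `v` in a corona: `v` itself together with its copy of the
second graph. -/
def clusterSum (f : α ⊕ α × β → ℤ) (v : α) : ℤ :=
  f (.inl v) + ∑ y, f (.inr (v, y))

theorem sum_clusterSum [Fintype α] (f : α ⊕ α × β → ℤ) : ∑ v, clusterSum f v = ∑ w, f w := by
  simp only [clusterSum, sum_add_distrib, Fintype.sum_sum_type, Fintype.sum_prod_type]

theorem clusterSum_add_const (f : α ⊕ α × β → ℤ) (c : ℤ) (v : α) :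
    clusterSum (fun w => f w + c) v = clusterSum f v + (Fintype.card β + 1) * c := by
  simp only [clusterSum, sum_add_distrib, sum_const, card_univ, nsmul_eq_mul]
  ring

theorem closedNbhdSum_corona_top_inr [Fintype α] (G : SimpleGraph α) (f : α ⊕ α × β → ℤ) (v : α)
    (x : β) : closedNbhdSum (corona G (⊤ : SimpleGraph β)) f (.inr (v, x)) = clusterSum f v := by
  rw [closedNbhdSum_corona_inr, closedNbhdSum_top, clusterSum]

theorem card_one_le_closedNbhdSum_corona_top [Fintype α] (G : SimpleGraph α) (f : α ⊕ α × β → ℤ) :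
    #{w | 1 ≤ closedNbhdSum (corona G (⊤ : SimpleGraph β)) f w} =
      #{v | 1 ≤ closedNbhdSum (corona G (⊤ : SimpleGraph β)) f (.inl v)} +
        Fintype.card β * #{v | 1 ≤ clusterSum f v} := by
  simp only [card_filter, Fintype.sum_sum_type, Fintype.sum_prod_type,
    closedNbhdSum_corona_top_inr, sum_const, card_univ, smul_eq_mul, mul_sum]

end Corona

section LowerBound

variable [Fintype α] {G : SimpleGraph α} {f : α ⊕ α × β → ℤ}

theorem IsMRDF.two_sub_card_le_clusterSum (hf : IsMRDF (corona G (⊤ : SimpleGraph β)) f)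
    (hβ : 2 ≤ Fintype.card β) (v : α) : 2 - (Fintype.card β : ℤ) ≤ clusterSum f v := by
  by_cases h_neg : ∃ x, f (.inr (v, x)) = -1
  · obtain ⟨x, hx⟩ := h_neg
    obtain ⟨w, h_adj, hw⟩ := hf.2.2 _ hx
    -- Raising every value by one makes all of them nonnegative, and the neighbor `w` gets value 3.
    have h_shift : f w + 1 ≤ clusterSum (fun u => f u + 1) v := by
      rw [← closedNbhdSum_corona_top_inr G _ v x]
      exact le_closedNbhdSum_of_adj (fun u => by linarith [hf.neg_one_le u]) h_adj
    rw [clusterSum_add_const] at h_shift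
    linarith
  · have h_copy : ∀ y, 1 ≤ f (.inr (v, y)) := fun y => by
      rcases hf.1 (.inr (v, y)) with h | h | h
      · exact absurd ⟨y, h⟩ h_neg
      all_goals omega
    have h_sum : (Fintype.card β : ℤ) ≤ ∑ y, f (.inr (v, y)) := by
      simpa using card_nsmul_le_sum univ (fun y => f (.inr (v, y))) 1 fun y _ => h_copy y
    have h_base := hf.neg_one_le (.inl v)
    rw [clusterSum]
    omega

theorem IsMRDF.card_mul_card_le (hf : IsMRDF (corona G (⊤ : SimpleGraph β)) f) :
    Fintype.card β * Fintype.card α ≤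
      Fintype.card α + 2 * Fintype.card β * #{v | 1 ≤ clusterSum f v} := by
  have h_majority := hf.2.1
  rw [card_one_le_closedNbhdSum_corona_top, Fintype.card_sum, Fintype.card_prod] at h_majority
  have h_base := card_le_univ
    (univ.filter fun v => 1 ≤ closedNbhdSum (corona G (⊤ : SimpleGraph β)) f (.inl v))
  linarith

theorem IsMRDF.le_sum (hf : IsMRDF (corona G (⊤ : SimpleGraph β)) f)
    (hβ : 2 ≤ Fintype.card β) :
    (2 - Fintype.card β) * (Fintype.card α : ℤ) +
      (Fintype.card β - 1) * #{v | 1 ≤ clusterSum f v} ≤ ∑ w, f w := by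
  have h_cluster : ∀ v, (2 - (Fintype.card β : ℤ)) +
      (if 1 ≤ clusterSum f v then (Fintype.card β : ℤ) - 1 else 0) ≤ clusterSum f v := fun v => by
    have := hf.two_sub_card_le_clusterSum hβ v
    split_ifs <;> omega
  calc (2 - Fintype.card β) * (Fintype.card α : ℤ) +
        (Fintype.card β - 1) * #{v | 1 ≤ clusterSum f v}
      = ∑ v, ((2 - (Fintype.card β : ℤ)) +
          if 1 ≤ clusterSum f v then (Fintype.card β : ℤ) - 1 else 0) := by
        rw [sum_add_distrib, sum_const, card_univ, ← sum_filter, sum_const, nsmul_eq_mul,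
          nsmul_eq_mul]
        ring
    _ ≤ ∑ v, clusterSum f v := sum_le_sum fun v _ => h_cluster v
    _ = ∑ w, f w := sum_clusterSum f

theorem IsMRDF.ceilDiv_le_card_one_le_clusterSum (hf : IsMRDF (corona G (⊤ : SimpleGraph β)) f)
    {r : ℕ} (hβ : Fintype.card β = 2 * r + 1) :
    (r * Fintype.card α) ⌈/⌉ (2 * r + 1) ≤ #{v | 1 ≤ clusterSum f v} := by
  have h_count := hf.card_mul_card_le
  rw [hβ] at h_count
  rw [ceilDiv_le_iff_le_mul (Nat.succ_pos _)]
  linarith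

end LowerBound

section Extremal

/-- The function on the vertices of a corona that is `2` on the first graph, `1` on the copies of
vertices in `T` attached to vertices in `S`, and `-1` on all other copies. For suitable `S` and `T`
it is a majority Roman dominating function of minimum weight. -/
def extremal [DecidableEq α] [DecidableEq β] (S : Finset α) (T : Finset β) : α ⊕ α × β → ℤ
  | .inl _ => 2
  | .inr (v, y) => if v ∈ S ∧ y ∈ T then 1 else -1

variable [DecidableEq α] [DecidableEq β] (S : Finset α) (T : Finset β)

theorem sum_extremal_inr (v : α) :
    ∑ y, extremal S T (.inr (v, y)) = (if v ∈ S then 2 * (#T : ℤ) else 0) - Fintype.card β := by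
  have h_value : ∀ y, extremal S T (.inr (v, y)) =
      (if v ∈ S then (if y ∈ T then 2 else 0) else 0) - 1 := fun y => by
    by_cases hv : v ∈ S <;> by_cases hy : y ∈ T <;> simp [extremal, hv, hy]
  simp only [h_value, sum_sub_distrib]
  split_ifs <;> simp [mul_comm]

theorem clusterSum_extremal (v : α) :
    clusterSum (extremal S T) v =
      (2 - (Fintype.card β : ℤ)) + if v ∈ S then 2 * (#T : ℤ) else 0 := by
  rw [clusterSum, sum_extremal_inr, extremal]
  ring

theorem sum_extremal [Fintype α] :
    ∑ w, extremal S T w = (2 - Fintype.card β) * (Fintype.card α : ℤ) + 2 * #T * #S := by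
  simp only [← sum_clusterSum, clusterSum_extremal, sum_add_distrib, sum_const, card_univ,
    sum_ite_mem, univ_inter, nsmul_eq_mul]
  ring

variable {S T} [Fintype α] {G : SimpleGraph α} [DecidableRel G.Adj]

theorem one_le_closedNbhdSum_extremal_inl {v : α} (hv : Fintype.card β ≤ 2 * G.degree v + 1) :
    1 ≤ closedNbhdSum (corona G (⊤ : SimpleGraph β)) (extremal S T) (.inl v) := by
  have h_const : closedNbhdSum G (fun u => extremal S T (.inl u)) v = (G.degree v + 1) * 2 :=
    closedNbhdSum_const G 2 v
  rw [closedNbhdSum_corona_inl, h_const, sum_extremal_inr]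
  split_ifs <;> omega

theorem isMRDF_extremal (hG : ∀ v, Fintype.card β ≤ 2 * G.degree v + 1)
    (hT : Fintype.card β ≤ 2 * #T + 1)
    (hS : Fintype.card β * Fintype.card α ≤ Fintype.card α + 2 * Fintype.card β * #S) :
    IsMRDF (corona G (⊤ : SimpleGraph β)) (extremal S T) := by
  refine ⟨?values, ?majority, ?domination⟩
  case values =>
    rintro (v | ⟨v, y⟩)
    · simp [extremal]
    · simp only [extremal]
      split_ifs <;> simp
  case majority =>
    have h_positive : S ⊆ univ.filter fun v => 1 ≤ clusterSum (extremal S T) v := fun v hv => by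
      rw [mem_filter_univ, clusterSum_extremal, if_pos hv]
      omega
    rw [card_one_le_closedNbhdSum_corona_top,
      filter_true_of_mem fun v _ => one_le_closedNbhdSum_extremal_inl (hG v), card_univ,
      Fintype.card_sum, Fintype.card_prod]
    have := Nat.mul_le_mul_left (Fintype.card β) (card_le_card h_positive)
    linarith
  case domination =>
    rintro (v | ⟨v, y⟩) h
    · simp [extremal] at h
    · exact ⟨.inl v, rfl, rfl⟩

end Extremal

end MRD

theorem mrdNum_corona_K3n_K3_general {α β : Type*} [Fintype α] [Fintype β] (G : SimpleGraph α)
    [DecidableRel G.Adj] {r : ℕ} (hr : 1 ≤ r) (hβ : Fintype.card β = 2 * r + 1)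
    (hG : ∀ v, r ≤ G.degree v) :
    MRD.mrdNum (MRD.corona G (⊤ : SimpleGraph β)) =
      2 * r * ((r * Fintype.card α) ⌈/⌉ (2 * r + 1) : ℕ) - (2 * r - 1) * Fintype.card α := by
  classical
  have h_pos : 0 < 2 * r + 1 := by omega
  have h_le_univ : (r * Fintype.card α) ⌈/⌉ (2 * r + 1) ≤ Fintype.card α :=
    (ceilDiv_le_iff_le_mul h_pos).2 (Nat.mul_le_mul_right _ (by omega))
  obtain ⟨S, -, hS⟩ := exists_subset_card_eq (s := (univ : Finset α)) h_le_univ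
  obtain ⟨T, -, hT⟩ := exists_subset_card_eq (s := (univ : Finset β)) (n := r)
    (by rw [card_univ]; omega)
  have h_majority : r * Fintype.card α ≤ (2 * r + 1) * #S := (ceilDiv_le_iff_le_mul h_pos).1 hS.ge
  rw [← hS]
  refine IsLeast.csInf_eq ⟨⟨MRD.extremal S T, MRD.isMRDF_extremal ?_ ?_ ?_, ?_⟩, ?_⟩
  · exact fun v => by linarith [hG v]
  · omega
  · rw [hβ]; linarith
  · rw [MRD.sum_extremal, hβ, hT]; push_cast; ring
  · rintro _ ⟨f, hf, rfl⟩
    have h_weight := hf.le_sum (by omega)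
    have h_positive : (#S : ℤ) ≤ #{v | 1 ≤ MRD.clusterSum f v} :=
      mod_cast hS.trans_le (hf.ceilDiv_le_card_one_le_clusterSum hβ)
    have h_scaled := mul_le_mul_of_nonneg_left h_positive (show (0 : ℤ) ≤ 2 * r by positivity)
    rw [hβ] at h_weight
    push_cast at h_weight
    linarith

/-- For `n ≥ 1`, the corona `K_{3n} ∘ K_3` satisfies `γ_MR(K_{3n} ∘ K_3) = -n`. -/
theorem mrdNum_corona_K3n_K3 (n : ℕ) (hn : 1 ≤ n) :
    MRD.mrdNum (MRD.corona (⊤ : SimpleGraph (Fin (3 * n))) (⊤ : SimpleGraph (Fin 3))) = -n := by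
  rw [mrdNum_corona_K3n_K3_general ⊤ le_rfl (Fintype.card_fin 3) fun v => by
    rw [SimpleGraph.complete_graph_degree, Fintype.card_fin]; omega]
  rw [Fintype.card_fin, one_mul, Nat.ceilDiv_eq_add_pred_div]
  omega
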